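/- arXiv:2508.19066 — 3 statements merged into one kernel-verified Lean document; each statement's English description precedes it below -/
import Mathlib

section
/- Let ℛ_n be the quotient of the polynomial ring ℂ[X_{i,j} : i ∈ ℤ, 1 ≤ j ≤ n] by the ideal generated by the elements Y_{s,n} − 1 for all s ∈ ℤ, where Y_{s,n} denotes the determinant of the n×n matrix (X_{i,j})_{s ≤ i ≤ s+n−1, 1 ≤ j ≤ n}. Then ℛ_n is an integral domain and a unique factorization domain, and it is isomorphic as a ℂ-algebra to a polynomial ring in countably many variables with coefficients in the coordinate ring ℂ[SL_n] = ℂ[X_{i,j} : 1 ≤ i, j ≤ n]/(det(X_{i,j}) − 1). -/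
/-- `Y_{s,n}`: the determinant of the `n × n` matrix of variables `(X_{i,j})` with
`s ≤ i ≤ s+n−1`, `1 ≤ j ≤ n`. -/
noncomputable def bandWindowDet (n : ℕ) (s : ℤ) : MvPolynomial (ℤ × Fin n) ℂ :=
  (Matrix.of fun i j : Fin n => MvPolynomial.X ((s + (i : ℕ), j) : ℤ × Fin n)).det

/-- The ring `ℛ_n` of regular functions on the scheme of `(SL(n), c)`-bands: the quotient of
`ℂ[X_{i,j} : i ∈ ℤ, 1 ≤ j ≤ n]` by the ideal generated by the `Y_{s,n} − 1`, `s ∈ ℤ`. -/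
noncomputable abbrev BandRing (n : ℕ) : Type :=
  MvPolynomial (ℤ × Fin n) ℂ ⧸ Ideal.span {p | ∃ s : ℤ, p = bandWindowDet n s - 1}

/-- The generic `n × n` determinant polynomial `det (X_{i,j})`. -/
noncomputable def genericDet (n : ℕ) : MvPolynomial (Fin n × Fin n) ℂ :=
  (Matrix.of fun i j : Fin n => MvPolynomial.X ((i, j) : Fin n × Fin n)).det

/-- The coordinate ring `ℂ[SL_n] = ℂ[X_{i,j} : 1 ≤ i, j ≤ n]/(det − 1)`. -/
noncomputable abbrev SLCoordRing (n : ℕ) : Type :=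
  MvPolynomial (Fin n × Fin n) ℂ ⧸ Ideal.span {genericDet n - 1}

/-!
Consecutive windows of a band share all but one row, so the matrix that carries one window to the
next is of companion type; having determinant one fixes the corner of its last row and leaves the
other `n - 1` entries free. A band is therefore the same as one window, an arbitrary matrix of
determinant one, together with a family of `n - 1` free coefficients for each `s ∈ ℤ`, and by Yoneda
the coordinate ring of bands is a polynomial ring over `k[SL_n]`.

Scaling one row gives an isomorphism of schemes `SL_n × 𝔾_m ≅ GL_n`, so `k[SL_n][T, T⁻¹]` is the
localization `k[X_{i,j}][1/det]`, a factorial domain. By Nagata's theorem `k[SL_n][T]` is then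
factorial, and so is `k[SL_n]`.
-/

open Matrix Polynomial

section Descent

variable {A : Type*} [CommRing A]

theorem uniqueFactorizationMonoid_of_polynomial [IsDomain A] [UniqueFactorizationMonoid A[X]] :
    UniqueFactorizationMonoid A := by
  refine .of_exists_prime_factors fun a ha ↦ ?_
  have hCa : C a ≠ 0 := C_ne_zero.mpr ha
  obtain ⟨f, hf_prime, u, hu⟩ := UniqueFactorizationMonoid.exists_prime_factors (C a) hCa
  have hf_const : ∀ q ∈ f, C (q.coeff 0) = q := fun q hq ↦ by
    have hdvd : q ∣ C a := (Multiset.dvd_prod hq).trans ⟨u, hu.symm⟩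
    have hdeg : q.natDegree ≤ 0 := natDegree_C a ▸ natDegree_le_of_dvd hdvd hCa
    exact (eq_C_of_natDegree_le_zero hdeg).symm
  refine ⟨f.map constantCoeff, ?_, u.map constantCoeff.toMonoidHom, ?_⟩
  · rintro _ hb
    obtain ⟨q, hq, rfl⟩ := Multiset.mem_map.mp hb
    exact prime_C_iff.mp ((hf_const q hq).symm ▸ hf_prime q hq)
  · rw [Multiset.prod_hom]
    have h : constantCoeff f.prod * constantCoeff (u : A[X]) = constantCoeff (C a) := by
      rw [← map_mul, hu]
    rwa [constantCoeff_apply (C a), coeff_C_zero] at h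

end Descent

section Laurent

/-- The ring `A[X, X⁻¹]`, as a localization of `A[X]`: unlike `LaurentPolynomial A`, this form has
the scalar towers over a base ring of `A` that the universal property below needs. -/
abbrev LaurentRing (A : Type*) [CommRing A] : Type _ := Localization.Away (X : A[X])

namespace LaurentRing

variable {A : Type*} [CommRing A]

variable (A) in
/-- The invertible variable of `A[X, X⁻¹]`. -/
noncomputable def T : (LaurentRing A)ˣ := (IsLocalization.Away.algebraMap_isUnit (X : A[X])).unit

theorem isDomain_of_laurentRing [IsDomain (LaurentRing A)] : IsDomain A :=
  have hX : Submonoid.powers (X : A[X]) ≤ nonZeroDivisors A[X] :=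
    Submonoid.powers_le.mpr X_mem_nonzeroDivisors
  ((IsLocalization.injective (LaurentRing A) hX).comp C_injective).isDomain
    ((algebraMap A[X] _).comp C)

-- Nagata: as `X` is prime in `A[X]`, unique factorization descends from `A[X, X⁻¹]` to `A[X]`.
theorem uniqueFactorizationMonoid_of_laurentRing [IsDomain A] [IsNoetherianRing A]
    [UniqueFactorizationMonoid (LaurentRing A)] : UniqueFactorizationMonoid A :=
  have := (UniqueFactorizationMonoid.iff_localizationAway_of_prime (prime_X (R := A))).mpr ‹_›
  uniqueFactorizationMonoid_of_polynomial

variable {k S : Type*} [CommRing k] [CommRing S] [Algebra k A] [Algebra k S]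

/-- The homomorphism out of `A[X, X⁻¹]` given by a homomorphism out of `A` and a unit. -/
noncomputable def lift (f : A →ₐ[k] S) (u : Sˣ) : LaurentRing A →ₐ[k] S :=
  IsLocalization.Away.liftAlgHom (X : A[X]) (f := aevalTower f (u : S)) <| by
    rw [aevalTower_X]
    exact u.isUnit

theorem lift_algebraMap (f : A →ₐ[k] S) (u : Sˣ) (a : A) : lift f u (algebraMap A _ a) = f a := by
  rw [IsScalarTower.algebraMap_apply A A[X]]
  simp [lift]

theorem lift_T (f : A →ₐ[k] S) (u : Sˣ) : lift f u (T A : LaurentRing A) = u := by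
  simp [lift, T]

theorem algHom_ext {f g : LaurentRing A →ₐ[k] S}
    (hA : ∀ a, f (algebraMap A _ a) = g (algebraMap A _ a))
    (hT : f (T A : LaurentRing A) = g (T A : LaurentRing A)) : f = g :=
  Localization.algHom_ext _ <| Polynomial.algHom_ext' (AlgHom.ext hA) hT

end LaurentRing

end Laurent

section RowScaling

variable {ι S S' S'' : Type*} [Fintype ι] [DecidableEq ι] [CommRing S] [CommRing S']
  [CommRing S'']

/-- The diagonal matrix with `c` in position `i` and `1` elsewhere: multiplication by it on the
left scales row `i` by `c`. -/
def rowScaling (i : ι) : Sˣ →* GL ι S :=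
  Units.map (((diagonalRingHom ι S).toMonoidHom).comp (MonoidHom.mulSingle (fun _ ↦ S) i))

theorem det_rowScaling (i : ι) (c : Sˣ) : (rowScaling i c).det = c := by
  ext
  simp [rowScaling, Finset.prod_pi_mulSingle']

theorem map_rowScaling (f : S →+* S') (i : ι) (c : Sˣ) :
    (rowScaling i c).map f = rowScaling i (Units.map f c) := by
  refine Units.ext <| (diagonal_map (map_zero f)).trans <| congrArg diagonal ?_
  ext j
  exact Pi.apply_mulSingle (fun _ ↦ f) (fun _ ↦ map_one f) i (c : S) j

/-- The matrix of determinant one obtained by dividing row `i` of `M` by the determinant. -/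
def normalizeRow (i : ι) (M : GL ι S) : Matrix.SpecialLinearGroup ι S where
  val := (rowScaling i M.det⁻¹ * M).val
  property := by
    rw [← Matrix.GeneralLinearGroup.val_det_apply, map_mul, det_rowScaling, inv_mul_cancel,
      Units.val_one]

theorem toGL_normalizeRow (i : ι) (M : GL ι S) :
    (normalizeRow i M).toGL = rowScaling i M.det⁻¹ * M := Units.ext rfl

theorem rowScaling_mul_normalizeRow (i : ι) (M : GL ι S) :
    rowScaling i M.det * (normalizeRow i M).toGL = M := by
  rw [toGL_normalizeRow, ← mul_assoc, ← map_mul, mul_inv_cancel, map_one, one_mul]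

theorem det_rowScaling_mul_toGL (i : ι) (c : Sˣ) (g : Matrix.SpecialLinearGroup ι S) :
    (rowScaling i c * g.toGL).det = c := by
  rw [map_mul, det_rowScaling, Matrix.SpecialLinearGroup.coeToGL_det, mul_one]

theorem normalizeRow_rowScaling_mul (i : ι) (c : Sˣ) (g : Matrix.SpecialLinearGroup ι S) :
    normalizeRow i (rowScaling i c * g.toGL) = g := by
  apply Matrix.SpecialLinearGroup.toGL_injective
  rw [toGL_normalizeRow, det_rowScaling_mul_toGL, ← mul_assoc, ← map_mul, inv_mul_cancel,
    map_one, one_mul]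

theorem specialLinearGroup_map_map (f : S →+* S') (f' : S' →+* S'')
    (g : Matrix.SpecialLinearGroup ι S) :
    (g.map f).map f' = g.map (f'.comp f) := rfl

theorem map_toGL (f : S →+* S') (g : Matrix.SpecialLinearGroup ι S) :
    g.toGL.map f = (g.map f).toGL := Units.ext rfl

theorem map_normalizeRow (f : S →+* S') (i : ι) (M : GL ι S) :
    (normalizeRow i M).map f = normalizeRow i (M.map f) := by
  apply Matrix.SpecialLinearGroup.toGL_injective
  rw [← map_toGL, toGL_normalizeRow, toGL_normalizeRow, map_mul, map_rowScaling, map_inv,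
    Matrix.GeneralLinearGroup.map_det]

end RowScaling

section GeneralLinear

variable (k ι : Type*) [CommRing k] [Fintype ι] [DecidableEq ι]

/-- The coordinate ring `k[GL_ι] = k[X_{i,j}][1/det]`. -/
abbrev GLCoordRing : Type _ := Localization.Away (mvPolynomialX ι ι k).det

namespace GLCoordRing

/-- The universal invertible matrix. -/
noncomputable def generic : GL ι (GLCoordRing k ι) :=
  .mk'' ((algebraMap _ (GLCoordRing k ι)).mapMatrix (mvPolynomialX ι ι k)) <| by
    rw [← RingHom.map_det]
    exact IsLocalization.Away.algebraMap_isUnit _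

variable {k ι} {S : Type*} [CommRing S] [Algebra k S]

variable (k) in
/-- The homomorphism out of `k[GL_ι]` classifying an invertible matrix. -/
noncomputable def lift (M : GL ι S) : GLCoordRing k ι →ₐ[k] S :=
  IsLocalization.Away.liftAlgHom (mvPolynomialX ι ι k).det
    (f := MvPolynomial.aeval fun p : ι × ι ↦ M p.1 p.2) <| by
      rw [AlgHom.map_det, mvPolynomialX_mapMatrix_aeval]
      exact M.det.isUnit

theorem map_lift_generic (M : GL ι S) : (generic k ι).map (lift k M : _ →+* S) = M := by
  ext i j
  simp [lift, generic]

theorem algHom_ext {f g : GLCoordRing k ι →ₐ[k] S}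
    (h : (generic k ι).map (f : _ →+* S) = (generic k ι).map (g : _ →+* S)) : f = g :=
  Localization.algHom_ext _ <| MvPolynomial.algHom_ext fun p ↦
    congrArg (fun M : GL ι S ↦ M p.1 p.2) h

instance [IsDomain k] : IsDomain (GLCoordRing k ι) :=
  IsLocalization.Away.isDomain _ (det_mvPolynomialX_ne_zero ι k)

end GLCoordRing

end GeneralLinear

section SpecialLinear

variable (k ι : Type*) [CommRing k] [Fintype ι] [DecidableEq ι]

/-- The coordinate ring `k[SL_ι] = k[X_{i,j}]/(det - 1)`; `SLCoordRing n` is the case `k = ℂ`,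
`ι = Fin n`. -/
abbrev SpecialLinearCoordRing : Type _ :=
  MvPolynomial (ι × ι) k ⧸ Ideal.span {(mvPolynomialX ι ι k).det - 1}

namespace SpecialLinearCoordRing

/-- The universal matrix of determinant one. -/
noncomputable def generic : Matrix.SpecialLinearGroup ι (SpecialLinearCoordRing k ι) where
  val := (Ideal.Quotient.mk _).mapMatrix (mvPolynomialX ι ι k)
  property := by
    rw [← RingHom.map_det, ← map_one (Ideal.Quotient.mk _), Ideal.Quotient.eq]
    exact Ideal.mem_span_singleton_self _

variable {k ι} {S : Type*} [CommRing S] [Algebra k S]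

variable (k) in
/-- The homomorphism out of `k[SL_ι]` classifying a matrix of determinant one. -/
noncomputable def lift (g : Matrix.SpecialLinearGroup ι S) : SpecialLinearCoordRing k ι →ₐ[k] S :=
  Ideal.Quotient.liftₐ _ (MvPolynomial.aeval fun p ↦ g p.1 p.2) <| by
    change Ideal.span _ ≤ RingHom.ker _
    rw [Ideal.span_singleton_le_iff_mem, RingHom.mem_ker, map_sub, map_one, AlgHom.map_det,
      mvPolynomialX_mapMatrix_aeval, g.det_coe, sub_self]

theorem map_lift_generic (g : Matrix.SpecialLinearGroup ι S) :
    (generic k ι).map (lift k g : _ →+* S) = g := by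
  ext i j
  exact MvPolynomial.aeval_X (fun p : ι × ι ↦ g p.1 p.2) (i, j)

theorem lift_generic (g : Matrix.SpecialLinearGroup ι S) (i j : ι) :
    lift k g ((generic k ι).val i j) = g.val i j :=
  congrArg (fun M : Matrix.SpecialLinearGroup ι S ↦ M.val i j) (map_lift_generic g)

theorem algHom_ext {f g : SpecialLinearCoordRing k ι →ₐ[k] S}
    (h : (generic k ι).map (f : _ →+* S) = (generic k ι).map (g : _ →+* S)) : f = g :=
  Ideal.Quotient.algHom_ext k <| MvPolynomial.algHom_ext fun p ↦
    congrArg (fun M : Matrix.SpecialLinearGroup ι S ↦ M p.1 p.2) h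

theorem mvPolynomial_algHom_ext {σ : Type*}
    {f g : MvPolynomial σ (SpecialLinearCoordRing k ι) →ₐ[k] S}
    (hC : ∀ i j, f (MvPolynomial.C ((generic k ι).val i j)) =
      g (MvPolynomial.C ((generic k ι).val i j)))
    (hX : ∀ i, f (MvPolynomial.X i) = g (MvPolynomial.X i)) : f = g :=
  MvPolynomial.algHom_ext' (algHom_ext (Subtype.ext (ext hC))) hX

end SpecialLinearCoordRing

end SpecialLinear

section GLSL

variable {k ι : Type*} [CommRing k] [Fintype ι] [DecidableEq ι]

namespace SpecialLinearCoordRing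

variable (k ι) in
/-- The universal matrix of determinant one, with entries in `k[SL_ι × 𝔾_m]`. -/
noncomputable def laurentGeneric :
    Matrix.SpecialLinearGroup ι (LaurentRing (SpecialLinearCoordRing k ι)) :=
  (generic k ι).map (algebraMap _ _)

section LaurentLift

variable {S : Type*} [CommRing S] [Algebra k S]

variable (k) in
/-- The homomorphism out of `k[SL_ι × 𝔾_m]` classifying a matrix of determinant one and a unit. -/
noncomputable def laurentLift (g : Matrix.SpecialLinearGroup ι S) (u : Sˣ) :
    LaurentRing (SpecialLinearCoordRing k ι) →ₐ[k] S :=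
  LaurentRing.lift (lift k g) u

theorem map_laurentLift_laurentGeneric (g : Matrix.SpecialLinearGroup ι S) (u : Sˣ) :
    (laurentGeneric k ι).map (laurentLift k g u : _ →+* S) = g := by
  conv_rhs => rw [← map_lift_generic (k := k) g]
  ext i j
  exact LaurentRing.lift_algebraMap (lift k g) u _

theorem laurentRing_algHom_ext {f g : LaurentRing (SpecialLinearCoordRing k ι) →ₐ[k] S}
    (hg : (laurentGeneric k ι).map (f : _ →+* S) = (laurentGeneric k ι).map (g : _ →+* S))
    (hT : f (LaurentRing.T (SpecialLinearCoordRing k ι)).val =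
      g (LaurentRing.T (SpecialLinearCoordRing k ι)).val) :
    f = g :=
  LaurentRing.algHom_ext (AlgHom.congr_fun (algHom_ext (f := f.comp (Algebra.algHom k _ _))
    (g := g.comp (Algebra.algHom k _ _)) hg)) hT

end LaurentLift

end SpecialLinearCoordRing

namespace GLCoordRing

open SpecialLinearCoordRing

variable (k)

/-- The homomorphism `k[GL_ι] → k[SL_ι × 𝔾_m]` of the morphism `(g, c) ↦ rowScaling i c * g`. -/
noncomputable def scalingHom (i : ι) :
    GLCoordRing k ι →ₐ[k] LaurentRing (SpecialLinearCoordRing k ι) :=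
  lift k (rowScaling i (LaurentRing.T _) * (laurentGeneric k ι).toGL)

/-- The homomorphism `k[SL_ι × 𝔾_m] → k[GL_ι]` of the morphism `M ↦ (normalizeRow i M, det M)`. -/
noncomputable def normalizingHom (i : ι) :
    LaurentRing (SpecialLinearCoordRing k ι) →ₐ[k] GLCoordRing k ι :=
  laurentLift k (normalizeRow i (generic k ι)) (generic k ι).det

theorem map_scalingHom_generic (i : ι) :
    (generic k ι).map (scalingHom k i : GLCoordRing k ι →+* _) =
      rowScaling i (LaurentRing.T _) * (laurentGeneric k ι).toGL :=
  map_lift_generic _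

theorem map_normalizingHom_laurentGeneric (i : ι) :
    (laurentGeneric k ι).map (normalizingHom k i : _ →+* GLCoordRing k ι) =
      normalizeRow i (generic k ι) :=
  map_laurentLift_laurentGeneric _ _

theorem normalizingHom_T (i : ι) :
    normalizingHom k i (LaurentRing.T (SpecialLinearCoordRing k ι)).val =
      (generic k ι).det.val :=
  LaurentRing.lift_T _ _

theorem normalizingHom_comp_scalingHom (i : ι) :
    (normalizingHom k i).comp (scalingHom k i) = AlgHom.id k (GLCoordRing k ι) := by
  have hT : Units.map (normalizingHom k i : _ →* GLCoordRing k ι)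
      (LaurentRing.T (SpecialLinearCoordRing k ι)) = (generic k ι).det :=
    Units.ext (normalizingHom_T k i)
  apply algHom_ext
  rw [AlgHom.comp_toRingHom, Matrix.GeneralLinearGroup.map_comp, MonoidHom.comp_apply,
    map_scalingHom_generic, map_mul, map_rowScaling, map_toGL, map_normalizingHom_laurentGeneric]
  exact (congrArg (rowScaling i · * _) hT).trans (rowScaling_mul_normalizeRow i _)

theorem scalingHom_comp_normalizingHom (i : ι) :
    (scalingHom k i).comp (normalizingHom k i) =
      AlgHom.id k (LaurentRing (SpecialLinearCoordRing k ι)) := by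
  have hdet : scalingHom k i (generic k ι).det.val = (LaurentRing.T _).val := by
    rw [← det_rowScaling_mul_toGL i (LaurentRing.T _) (laurentGeneric k ι),
      ← map_scalingHom_generic, Matrix.GeneralLinearGroup.map_det]
    rfl
  apply laurentRing_algHom_ext
  · rw [AlgHom.comp_toRingHom, ← specialLinearGroup_map_map, map_normalizingHom_laurentGeneric,
      map_normalizeRow, map_scalingHom_generic, normalizeRow_rowScaling_mul]
    rfl
  · rw [AlgHom.comp_apply, normalizingHom_T, hdet, AlgHom.id_apply]

/-- The isomorphism of coordinate rings given by the isomorphism of schemes `SL_ι × 𝔾_m ≅ GL_ι`,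
`(g, c) ↦ rowScaling i c * g`. -/
noncomputable def equivLaurentRing (i : ι) :
    GLCoordRing k ι ≃ₐ[k] LaurentRing (SpecialLinearCoordRing k ι) :=
  .ofAlgHom (scalingHom k i) (normalizingHom k i) (scalingHom_comp_normalizingHom k i)
    (normalizingHom_comp_scalingHom k i)

end GLCoordRing

namespace SpecialLinearCoordRing

instance [Nonempty ι] [IsDomain k] : IsDomain (SpecialLinearCoordRing k ι) :=
  let ⟨i⟩ := ‹Nonempty ι›
  have := (GLCoordRing.equivLaurentRing k i).symm.toMulEquiv.isDomain (GLCoordRing k ι)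
  LaurentRing.isDomain_of_laurentRing

instance [Nonempty ι] [IsDomain k] [IsNoetherianRing k] [UniqueFactorizationMonoid k] :
    UniqueFactorizationMonoid (SpecialLinearCoordRing k ι) :=
  let ⟨i⟩ := ‹Nonempty ι›
  let e := (GLCoordRing.equivLaurentRing k i).toMulEquiv
  have := e.symm.isDomain (GLCoordRing k ι)
  have := e.uniqueFactorizationMonoid inferInstance
  LaurentRing.uniqueFactorizationMonoid_of_laurentRing

end SpecialLinearCoordRing

end GLSL

section Companion

variable {S : Type*} [CommRing S] {m : ℕ}

/-- The matrix `P` is obtained from `Q` by moving all rows up by one, which drops the first row of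
`Q` and leaves the last row of `P` free: the relation between consecutive windows of a band. -/
def IsRowShift (P Q : Matrix (Fin (m + 1)) (Fin (m + 1)) S) : Prop :=
  ∀ (k : Fin m) (j : Fin (m + 1)), P k.castSucc j = Q k.succ j

theorem IsRowShift.mul_right {P Q : Matrix (Fin (m + 1)) (Fin (m + 1)) S} (h : IsRowShift P Q)
    (R : Matrix (Fin (m + 1)) (Fin (m + 1)) S) : IsRowShift (P * R) (Q * R) := fun k j ↦ by
  simp only [mul_apply, h k]

theorem IsRowShift.det_eq {M : Matrix (Fin (m + 1)) (Fin (m + 1)) S} (hM : IsRowShift M 1) :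
    M.det = (-1) ^ m * M (Fin.last m) 0 := by
  have hsub : M.submatrix (Fin.last m).succAbove Fin.succ = 1 := by
    ext k l
    simp [hM k, one_apply]
  have hzero (k : Fin m) : M k.castSucc 0 = 0 := by
    rw [hM, one_apply_ne (Fin.succ_ne_zero k)]
  rw [det_succ_column_zero, Fin.sum_univ_castSucc, hsub]
  simp [hzero]

/-- The companion-type matrix with rows `e₁, …, eₘ` and `((-1) ^ m, a 0, …, a (m - 1))`; the corner
entry makes its determinant one. -/
def companion (a : Fin m → S) : Matrix.SpecialLinearGroup (Fin (m + 1)) S where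
  val := of fun i ↦ Fin.lastCases (motive := fun _ ↦ Fin (m + 1) → S) (Fin.cons ((-1) ^ m) a)
    (fun k ↦ (1 : Matrix (Fin (m + 1)) (Fin (m + 1)) S) k.succ) i
  property := by
    refine (IsRowShift.det_eq (S := S) fun k j ↦ ?_).trans ?_
    · rw [of_apply, Fin.lastCases_castSucc]
    · simp [← mul_pow]

theorem isRowShift_companion (a : Fin m → S) : IsRowShift (companion a).val 1 := fun k j ↦ by
  simp [companion]

theorem companion_last_zero (a : Fin m → S) : (companion a).val (Fin.last m) 0 = (-1) ^ m := by
  simp [companion]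

theorem companion_last_succ (a : Fin m → S) (k : Fin m) :
    (companion a).val (Fin.last m) k.succ = a k := by
  simp [companion]

theorem isRowShift_companion_mul (a : Fin m → S)
    (g : Matrix.SpecialLinearGroup (Fin (m + 1)) S) : IsRowShift (companion a * g).val g.val := by
  simpa only [one_mul] using! (isRowShift_companion a).mul_right g.val

theorem IsRowShift.eq_companion {g : Matrix.SpecialLinearGroup (Fin (m + 1)) S}
    (hg : IsRowShift g.val 1) : g = companion fun k ↦ g.val (Fin.last m) k.succ := by
  ext i j
  cases i using Fin.lastCases with
  | cast k => exact (hg k j).trans (isRowShift_companion _ k j).symm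
  | last =>
    cases j using Fin.cases with
    | zero =>
      have hdet : 1 = (-1) ^ m * g.val (Fin.last m) 0 := g.property.symm.trans hg.det_eq
      have hsign : ((-1) ^ m * (-1) ^ m : S) = 1 := by simp [← mul_pow]
      refine Eq.trans ?_ (companion_last_zero _).symm
      linear_combination g.val (Fin.last m) 0 * -hsign - (-1) ^ m * hdet
    | succ j => exact (companion_last_succ (fun k ↦ g.val (Fin.last m) k.succ) j).symm

theorem IsRowShift.mul_inv_eq_companion {g h : Matrix.SpecialLinearGroup (Fin (m + 1)) S}
    (hgh : IsRowShift g.val h.val) :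
    g * h⁻¹ = companion fun k ↦ (g * h⁻¹).val (Fin.last m) k.succ := by
  have hshift : IsRowShift (g * h⁻¹).val (h * h⁻¹).val := hgh.mul_right _
  rw [mul_inv_cancel] at hshift
  exact hshift.eq_companion

end Companion

section Band

theorem exists_int_recursion {α : Type*} (e : ℤ → Equiv.Perm α) (a : α) :
    ∃ W : ℤ → α, W 0 = a ∧ ∀ s, W (s + 1) = e s (W s) := by
  let W (s : ℤ) : α := Int.inductionOn' s 0 a (fun s _ ↦ e s) fun s _ ↦ (e (s - 1)).symm
  refine ⟨W, Int.inductionOn'_self .., fun s ↦ ?_⟩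
  rcases le_or_gt 0 s with hs | hs
  · exact Int.inductionOn'_add_one hs
  · have hpred : W (s + 1 - 1) = (e (s + 1 - 1)).symm (W (s + 1)) :=
      Int.inductionOn'_sub_one (Int.add_one_le_of_lt hs)
    rw [add_sub_cancel_right] at hpred
    rw [hpred, Equiv.apply_symm_apply]

/-- An `(SL(n), c)`-band over `S`, for the standard Coxeter element `c`: an array of entries with
rows indexed by `ℤ` and `n` columns in which every `n` consecutive rows have determinant one. -/
@[ext]
structure SLBand (n : ℕ) (S : Type*) [CommRing S] where
  entry : ℤ → Fin n → S
  det_window : ∀ s : ℤ, (of fun i j : Fin n ↦ entry (s + (i : ℕ)) j).det = 1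

namespace SLBand

variable {S S' : Type*} [CommRing S] [CommRing S'] {n m : ℕ}

/-- The `n × n` window of a band starting at row `s`. -/
def window (x : SLBand n S) (s : ℤ) : Matrix.SpecialLinearGroup (Fin n) S :=
  ⟨of fun i j ↦ x.entry (s + (i : ℕ)) j, x.det_window s⟩

/-- The image of a band under a ring homomorphism. -/
def map (f : S →+* S') (x : SLBand n S) : SLBand n S' where
  entry s j := f (x.entry s j)
  det_window s := ((x.window s).map f).2

theorem window_map (f : S →+* S') (x : SLBand n S) (s : ℤ) :
    (x.map f).window s = (x.window s).map f := rfl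

theorem ext_window {x y : SLBand (m + 1) S} (h : x.window = y.window) : x = y := by
  ext s j
  simpa [window] using! congrArg (fun w ↦ (w s).val 0 j) h

theorem isRowShift_window (x : SLBand (m + 1) S) (s : ℤ) :
    IsRowShift (x.window (s + 1)).val (x.window s).val := fun k j ↦ by
  simp [window, add_assoc, add_comm (1 : ℤ)]

/-- The coefficients of the linear recursion that passes from a window of a band to the next. -/
def coeff (x : SLBand (m + 1) S) (s : ℤ) (k : Fin m) : S :=
  (x.window (s + 1) * (x.window s)⁻¹).val (Fin.last m) k.succ

theorem window_succ (x : SLBand (m + 1) S) (s : ℤ) :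
    x.window (s + 1) = companion (x.coeff s) * x.window s :=
  mul_inv_eq_iff_eq_mul.mp (x.isRowShift_window s).mul_inv_eq_companion

theorem coeff_map (f : S →+* S') (x : SLBand (m + 1) S) (s : ℤ) (k : Fin m) :
    (x.map f).coeff s k = f (x.coeff s k) := by
  simp only [coeff, window_map, ← map_inv, ← map_mul]
  rfl

theorem coeff_eq_of_window_succ {x : SLBand (m + 1) S} {s : ℤ} {a : Fin m → S}
    (h : x.window (s + 1) = companion a * x.window s) : x.coeff s = a := by
  ext k
  rw [coeff, h, mul_inv_cancel_right, companion_last_succ]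

theorem ext_window_zero_coeff {x y : SLBand (m + 1) S} (h₀ : x.window 0 = y.window 0)
    (hcoeff : x.coeff = y.coeff) : x = y := by
  refine ext_window <| funext fun s ↦ ?_
  induction s using Int.induction_on with
  | zero => exact h₀
  | succ s ih => rw [window_succ, window_succ, ih, hcoeff]
  | pred s ih =>
    rw [← sub_add_cancel (-(s : ℤ)) 1, window_succ, window_succ, hcoeff] at ih
    exact mul_left_cancel ih

theorem exists_window_eq {W : ℤ → Matrix.SpecialLinearGroup (Fin (m + 1)) S}
    (hW : ∀ s, IsRowShift (W (s + 1)).val (W s).val) : ∃ x : SLBand (m + 1) S, x.window = W := by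
  have hrow (s : ℤ) (i : ℕ) (hi : i < m + 1) : (W (s + i)).val 0 = (W s).val ⟨i, hi⟩ := by
    induction i generalizing s with
    | zero => simp
    | succ i ih =>
      rw [Nat.cast_succ, add_comm (i : ℤ), ← add_assoc, ih (s + 1) (by lia)]
      exact funext (hW s ⟨i, by lia⟩)
  have hwindow (s : ℤ) : (of fun i j : Fin (m + 1) ↦ (W (s + (i : ℕ))).val 0 j) = (W s).val :=
    funext fun i ↦ hrow s i i.2
  exact ⟨⟨fun s ↦ (W s).val 0, fun s ↦ (hwindow s).symm ▸ (W s).2⟩,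
    funext fun s ↦ Subtype.ext (hwindow s)⟩

theorem exists_window_zero_eq_coeff_eq (g : Matrix.SpecialLinearGroup (Fin (m + 1)) S)
    (a : ℤ → Fin m → S) : ∃ x : SLBand (m + 1) S, x.window 0 = g ∧ x.coeff = a := by
  obtain ⟨W, hzero, hsucc⟩ := exists_int_recursion (fun s ↦ Equiv.mulLeft (companion (a s))) g
  obtain ⟨x, rfl⟩ := exists_window_eq (W := W) fun s ↦ by
    rw [hsucc]
    exact isRowShift_companion_mul (a s) (W s)
  exact ⟨x, hzero, funext fun s ↦ coeff_eq_of_window_succ (hsucc s)⟩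

variable (S m) in
/-- Bands are parametrized by their window at `0` and their coefficients, which are arbitrary. -/
noncomputable def equivWindowCoeff :
    SLBand (m + 1) S ≃ Matrix.SpecialLinearGroup (Fin (m + 1)) S × (ℤ → Fin m → S) :=
  .ofBijective (fun x ↦ (x.window 0, x.coeff))
    ⟨fun _ _ h ↦ ext_window_zero_coeff (congrArg Prod.fst h) (congrArg Prod.snd h),
      fun p ↦ (exists_window_zero_eq_coeff_eq p.1 p.2).imp fun _ hx ↦ Prod.ext hx.1 hx.2⟩

end SLBand

end Band

section BandCoordinates

variable (k : Type*) [CommRing k]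

/-- The ring of regular functions on the scheme of `(SL(n), c)`-bands over `k`; `BandRing n` is the
case `k = ℂ`. -/
abbrev BandCoordRing (n : ℕ) : Type _ :=
  MvPolynomial (ℤ × Fin n) k ⧸ Ideal.span {p : MvPolynomial (ℤ × Fin n) k | ∃ s : ℤ, p =
    (of fun i j : Fin n ↦ MvPolynomial.X ((s + (i : ℕ), j) : ℤ × Fin n)).det - 1}

/-- The coordinate ring `k[SL_{m+1}][a_{s,l} : s ∈ ℤ, l < m]` of pairs of a window and a family of
coefficients. -/
abbrev WindowCoeffRing (m : ℕ) : Type _ :=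
  MvPolynomial (ℤ × Fin m) (SpecialLinearCoordRing k (Fin (m + 1)))

namespace BandCoordRing

/-- The universal band. -/
noncomputable def generic (n : ℕ) : SLBand n (BandCoordRing k n) where
  entry s j := Ideal.Quotient.mk _ (MvPolynomial.X (s, j))
  det_window s := by
    refine (RingHom.map_det (Ideal.Quotient.mk _) _).symm.trans ?_
    rw [← map_one (Ideal.Quotient.mk _), Ideal.Quotient.eq]
    exact Ideal.subset_span ⟨s, rfl⟩

variable {k} {n m : ℕ} {S : Type*} [CommRing S] [Algebra k S]

variable (k) in
/-- The homomorphism out of the coordinate ring classifying a band. -/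
noncomputable def lift (x : SLBand n S) : BandCoordRing k n →ₐ[k] S :=
  Ideal.Quotient.liftₐ _ (MvPolynomial.aeval fun p ↦ x.entry p.1 p.2) <| by
    change Ideal.span _ ≤ RingHom.ker _
    rw [Ideal.span_le]
    rintro _ ⟨s, rfl⟩
    rw [SetLike.mem_coe, RingHom.mem_ker, map_sub, map_one, AlgHom.map_det, sub_eq_zero,
      ← x.det_window s]
    congr 1
    ext i j
    exact MvPolynomial.aeval_X _ _

theorem map_lift_generic (x : SLBand n S) : (generic k n).map (lift k x : _ →+* S) = x := by
  ext s j
  exact MvPolynomial.aeval_X (fun p : ℤ × Fin n ↦ x.entry p.1 p.2) (s, j)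

theorem algHom_ext {f g : BandCoordRing k n →ₐ[k] S}
    (h : (generic k n).map (f : _ →+* S) = (generic k n).map (g : _ →+* S)) : f = g :=
  Ideal.Quotient.algHom_ext k <| MvPolynomial.algHom_ext fun p ↦
    congrArg (fun x : SLBand n S ↦ x.entry p.1 p.2) h

variable (k m)

/-- The band whose window at `0` and coefficients are the universal ones. -/
noncomputable def genericOfWindowCoeff :
    SLBand (m + 1) (WindowCoeffRing k m) :=
  (SLBand.equivWindowCoeff _ m).symm
    ((SpecialLinearCoordRing.generic k (Fin (m + 1))).map MvPolynomial.C,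
      fun s l ↦ MvPolynomial.X (s, l))

theorem window_genericOfWindowCoeff :
    (genericOfWindowCoeff k m).window 0 =
      (SpecialLinearCoordRing.generic k (Fin (m + 1))).map MvPolynomial.C :=
  congrArg Prod.fst ((SLBand.equivWindowCoeff _ m).apply_symm_apply _)

theorem coeff_genericOfWindowCoeff :
    (genericOfWindowCoeff k m).coeff = fun s l ↦ MvPolynomial.X (s, l) :=
  congrArg Prod.snd ((SLBand.equivWindowCoeff _ m).apply_symm_apply _)

/-- The homomorphism from the ring of windows at `0` and coefficients to the coordinate ring of
bands, which reads both off the universal band. -/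
noncomputable def windowCoeffHom :
    WindowCoeffRing k m →ₐ[k]
      BandCoordRing k (m + 1) :=
  MvPolynomial.aevalTower (SpecialLinearCoordRing.lift k ((generic k (m + 1)).window 0))
    fun p ↦ (generic k (m + 1)).coeff p.1 p.2

theorem windowCoeffHom_X (p : ℤ × Fin m) :
    windowCoeffHom k m (MvPolynomial.X p) = (generic k (m + 1)).coeff p.1 p.2 :=
  MvPolynomial.aevalTower_X _ _ _

theorem windowCoeffHom_C_generic (i j : Fin (m + 1)) :
    windowCoeffHom k m (MvPolynomial.C ((SpecialLinearCoordRing.generic k _).val i j)) =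
      ((generic k (m + 1)).window 0).val i j := by
  rw [← SpecialLinearCoordRing.lift_generic (k := k) ((generic k (m + 1)).window 0)]
  exact MvPolynomial.aevalTower_C _ _ _

theorem map_windowCoeffHom_genericOfWindowCoeff :
    (genericOfWindowCoeff k m).map (windowCoeffHom k m : _ →+* _) = generic k (m + 1) := by
  apply SLBand.ext_window_zero_coeff
  · rw [SLBand.window_map, window_genericOfWindowCoeff]
    ext i j
    exact windowCoeffHom_C_generic k m i j
  · ext s l
    rw [SLBand.coeff_map, coeff_genericOfWindowCoeff]
    exact windowCoeffHom_X k m (s, l)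

theorem windowCoeffHom_comp_lift :
    (windowCoeffHom k m).comp (lift k (genericOfWindowCoeff k m)) =
      AlgHom.id k (BandCoordRing k (m + 1)) := by
  have hmap := map_windowCoeffHom_genericOfWindowCoeff k m
  rw [← map_lift_generic (k := k) (genericOfWindowCoeff k m)] at hmap
  exact algHom_ext hmap

theorem lift_comp_windowCoeffHom :
    (lift k (genericOfWindowCoeff k m)).comp (windowCoeffHom k m) =
      AlgHom.id k (WindowCoeffRing k m) := by
  have hlift := map_lift_generic (k := k) (genericOfWindowCoeff k m)
  apply SpecialLinearCoordRing.mvPolynomial_algHom_ext (S := WindowCoeffRing k m)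
  · intro i j
    have hwindow := window_genericOfWindowCoeff k m
    rw [← hlift, SLBand.window_map] at hwindow
    rw [AlgHom.comp_apply, windowCoeffHom_C_generic]
    exact congrArg (fun M ↦ M.val i j) hwindow
  · intro p
    have hcoeff := congrFun₂ (coeff_genericOfWindowCoeff k m) p.1 p.2
    rw [← hlift, SLBand.coeff_map] at hcoeff
    rw [AlgHom.comp_apply, windowCoeffHom_X]
    exact hcoeff

/-- The isomorphism of coordinate rings given by `SLBand.equivWindowCoeff`. -/
noncomputable def equivMvPolynomial :
    BandCoordRing k (m + 1) ≃ₐ[k]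
      WindowCoeffRing k m :=
  .ofAlgHom (lift k (genericOfWindowCoeff k m)) (windowCoeffHom k m)
    (lift_comp_windowCoeffHom k m) (windowCoeffHom_comp_lift k m)

end BandCoordRing

end BandCoordinates

theorem stmt_17_general (k : Type*) [CommRing k] [IsDomain k] [IsNoetherianRing k]
    [UniqueFactorizationMonoid k] (n : ℕ) (hn : 2 ≤ n) :
    ∃ _ : IsDomain (BandCoordRing k n), UniqueFactorizationMonoid (BandCoordRing k n) ∧
      Nonempty (BandCoordRing k n ≃ₐ[k] MvPolynomial ℕ (SpecialLinearCoordRing k (Fin n))) := by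
  obtain ⟨m, rfl⟩ : ∃ m, n = m + 1 := ⟨n - 1, by lia⟩
  have : Nonempty (Fin m) := ⟨⟨0, by lia⟩⟩
  obtain ⟨r⟩ := nonempty_equiv_of_countable (α := ℤ × Fin m) (β := ℕ)
  let e := (BandCoordRing.equivMvPolynomial k m).trans <|
    (MvPolynomial.renameEquiv (SpecialLinearCoordRing k (Fin (m + 1))) r).restrictScalars k
  exact ⟨e.toMulEquiv.isDomain _, e.symm.toMulEquiv.uniqueFactorizationMonoid inferInstance, ⟨e⟩⟩

/-- `ℛ_n` is an integral domain and a unique factorization domain, isomorphic as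
a `ℂ`-algebra to a polynomial ring in countably many variables with coefficients in
`ℂ[SL_n]`. -/
theorem stmt_17 (n : ℕ) (hn : 2 ≤ n) :
    ∃ _ : IsDomain (BandRing n), UniqueFactorizationMonoid (BandRing n) ∧
      Nonempty (BandRing n ≃ₐ[ℂ] MvPolynomial ℕ (SLCoordRing n)) :=
  stmt_17_general ℂ n hn
end

section
/- Let R be a commutative ℂ-algebra, let l : ℤ → L(R) be any sequence, and let b₀ be any lower-triangular n×n matrix over R with all diagonal entries invertible and determinant 1. Define b : ℤ → SL(n, R) as the unique sequence of lower-triangular matrices with b(0) = b₀ and b(s)·b(s+1)⁻¹ = l(s) for all s ∈ ℤ. Then there exists a unique sequence u : ℤ → U(R) such that the sequence g(s) := u(s)·b(s) is an (SL(n), c)-band, i.e., g(s)·g(s+1)⁻¹ ∈ A(R) for every s ∈ ℤ. (This expresses the surjectivity on R-points of the morphism P from the scheme of bands with twisted Birkhoff decompositions to (L^{c,e})^ℤ.) -/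
/-- Steinberg's cross-section `A(R)` for `SL(n)` and the standard Coxeter element. -/
def IsSteinbergA {n : ℕ} {R : Type*} [CommRing R] (m : Matrix (Fin n) (Fin n) R) : Prop :=
  (∀ i j : Fin n, (i : ℕ) = 0 → (j : ℕ) = n - 1 → m i j = (-1) ^ (n - 1)) ∧
  (∀ i j : Fin n, (i : ℕ) = (j : ℕ) + 1 → m i j = 1) ∧
  (∀ i j : Fin n, (i : ℕ) ≠ 0 → (i : ℕ) ≠ (j : ℕ) + 1 → m i j = 0)

/-- Upper unitriangular matrices: the group `U(R)`. -/
def IsUniUpper {n : ℕ} {R : Type*} [CommRing R] (u : Matrix (Fin n) (Fin n) R) : Prop :=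
  (∀ i : Fin n, u i i = 1) ∧ ∀ i j : Fin n, (j : ℕ) < (i : ℕ) → u i j = 0

/-- The `R`-points of the reduced double Bruhat cell `L^{c,e}` of `SL(n)`: lower triangular,
subdiagonal entries `1`, entries below the subdiagonal `0`, invertible diagonal entries, and
determinant `1`. -/
def IsSteinbergL {n : ℕ} {R : Type*} [CommRing R] (l : Matrix (Fin n) (Fin n) R) : Prop :=
  l.det = 1 ∧
  (∀ i : Fin n, IsUnit (l i i)) ∧
  (∀ i j : Fin n, (i : ℕ) = (j : ℕ) + 1 → l i j = 1) ∧
  (∀ i j : Fin n, (j : ℕ) + 1 < (i : ℕ) → l i j = 0) ∧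
  (∀ i j : Fin n, (i : ℕ) < (j : ℕ) → l i j = 0)

/-!
Since `g(s) g(s+1)⁻¹ = u(s) l(s) u(s+1)⁻¹` has determinant `1`, it lies in `A(R)` as soon as its
rows below the first are `e₁, …, eₙ₋₁` in order, the corner entry being then forced by the
determinant. Multiplying by `u(s+1)` on the right, this says that row `i` of `u(s+1)` is row `i + 1`
of `u(s)` times `l(s)`. The last row of every `u(s)` is `eₙ`, so these equations determine all rows
from the bottom up; because `l(s)` is Hessenberg with unit subdiagonal, each step moves the leading
`1` of a row exactly one place to the left, which makes the solution unitriangular.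
-/

open Matrix

section LeadingOne

/-- The first nonzero entry of the vector `v` is a `1`, in position `i`. Row by row, this describes
both the unitriangular matrices and the unit Hessenberg matrices. -/
def HasLeadingOne {ι R : Type*} [LT ι] [Zero R] [One R] (v : ι → R) (i : ι) : Prop :=
  v i = 1 ∧ ∀ j < i, v j = 0

/-- Upper Hessenberg matrices with all subdiagonal entries equal to `1`, encoded by their rows
below the first. The elements of `L(R)` are of this form. -/
def IsUnitHessenberg {N : ℕ} {R : Type*} [Zero R] [One R]
    (l : Matrix (Fin (N + 1)) (Fin (N + 1)) R) : Prop :=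
  ∀ i : Fin N, HasLeadingOne (l i.succ) i.castSucc

variable {N : ℕ} {R : Type*}

lemma hasLeadingOne_last_iff [Zero R] [One R] {v : Fin (N + 1) → R} :
    HasLeadingOne v (Fin.last N) ↔ v = Pi.single (Fin.last N) 1 := by
  constructor
  · rintro ⟨h_one, h_zero⟩
    ext j
    rcases (Fin.le_last j).lt_or_eq with hj | rfl
    · rw [h_zero j hj, Pi.single_eq_of_ne hj.ne]
    · rw [h_one, Pi.single_eq_same]
  · rintro rfl
    exact ⟨Pi.single_eq_same _ _, fun j hj => Pi.single_eq_of_ne hj.ne _⟩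

lemma HasLeadingOne.vecMul [NonAssocSemiring R] {v : Fin (N + 1) → R} {i : Fin N}
    {l : Matrix (Fin (N + 1)) (Fin (N + 1)) R} (hv : HasLeadingOne v i.succ)
    (hl : IsUnitHessenberg l) : HasLeadingOne (v ᵥ* l) i.castSucc := by
  have agrees_with_row : ∀ j ≤ i.castSucc, (v ᵥ* l) j = l i.succ j := by
    intro j hj
    have other_terms_vanish : ∀ m ≠ i.succ, v m * l m j = 0 := by
      intro m hm
      rcases hm.lt_or_gt with hm | hm
      · rw [hv.2 m hm, zero_mul]
      · obtain ⟨k, rfl⟩ := Fin.exists_succ_eq.2 (Fin.ne_zero_of_lt hm)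
        have hik : i.castSucc < k.castSucc := Fin.succ_lt_succ_iff.1 hm
        rw [(hl k).2 j (hj.trans_lt hik), mul_zero]
    calc (v ᵥ* l) j = v i.succ * l i.succ j :=
          Fintype.sum_eq_single i.succ other_terms_vanish
      _ = l i.succ j := by rw [hv.1, one_mul]
  refine ⟨?_, fun j hj => ?_⟩
  · rw [agrees_with_row _ le_rfl, (hl i).1]
  · rw [agrees_with_row j hj.le, (hl i).2 j hj]

end LeadingOne

section SteinbergCells

variable {n N : ℕ} {R : Type*} [CommRing R]

lemma isUniUpper_iff_hasLeadingOne {u : Matrix (Fin n) (Fin n) R} :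
    IsUniUpper u ↔ ∀ i, HasLeadingOne (u i) i :=
  forall_and.symm

lemma IsUniUpper.det_eq_one {u : Matrix (Fin n) (Fin n) R} (hu : IsUniUpper u) : u.det = 1 := by
  rw [det_of_isUpperTriangular hu.2]
  exact Finset.prod_eq_one fun i _ => hu.1 i

lemma IsSteinbergL.isUnitHessenberg {l : Matrix (Fin (N + 1)) (Fin (N + 1)) R}
    (hl : IsSteinbergL l) : IsUnitHessenberg l := by
  obtain ⟨-, -, h_subdiag, h_below, -⟩ := hl
  exact fun i => ⟨h_subdiag _ _ rfl, fun j hj => h_below _ _ (Nat.succ_lt_succ hj)⟩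

lemma isSteinbergA_iff_corner_and_rows {a : Matrix (Fin (N + 1)) (Fin (N + 1)) R} :
    IsSteinbergA a ↔
      a 0 (Fin.last N) = (-1) ^ N ∧ ∀ i : Fin N, a i.succ = Pi.single i.castSucc 1 := by
  constructor
  · rintro ⟨h_corner, h_subdiag, h_zero⟩
    refine ⟨h_corner _ _ rfl rfl, fun i => funext fun j => ?_⟩
    rcases eq_or_ne j i.castSucc with rfl | hj
    · rw [Pi.single_eq_same, h_subdiag _ _ rfl]
    · rw [Pi.single_eq_of_ne hj, h_zero _ _ (Nat.succ_ne_zero _)]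
      exact fun h => hj (Fin.ext (Nat.succ.inj h).symm)
  · rintro ⟨h_corner, h_rows⟩
    refine ⟨fun i j hi hj => ?_, fun i j hij => ?_, fun i j hi hij => ?_⟩
    · obtain rfl : i = 0 := Fin.ext hi
      obtain rfl : j = Fin.last N := Fin.ext hj
      exact h_corner
    · obtain ⟨k, rfl⟩ := Fin.exists_succ_eq.2 (show i ≠ 0 by rintro rfl; simp at hij)
      obtain rfl : j = k.castSucc := Fin.ext (Nat.succ.inj hij).symm
      rw [h_rows, Pi.single_eq_same]
    · obtain ⟨k, rfl⟩ := Fin.exists_succ_eq.2 (show i ≠ 0 by rintro rfl; exact hi rfl)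
      rw [h_rows, Pi.single_eq_of_ne]
      rintro rfl
      exact hij rfl

lemma det_eq_corner_of_rows {a : Matrix (Fin (N + 1)) (Fin (N + 1)) R}
    (ha : ∀ i : Fin N, a i.succ = Pi.single i.castSucc 1) :
    a.det = (-1) ^ N * a 0 (Fin.last N) := by
  have minor_eq_one : a.submatrix Fin.succ Fin.castSucc = 1 := by
    ext i j
    simp [ha, Matrix.one_apply, Pi.single_apply, eq_comm]
  have last_col_eq_zero : ∀ i : Fin N, a i.succ (Fin.last N) = 0 := fun i => by
    rw [ha, Pi.single_eq_of_ne (Fin.castSucc_lt_last i).ne']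
  rw [det_succ_column a (Fin.last N), Fin.sum_univ_succ]
  simp [last_col_eq_zero, minor_eq_one]

lemma isSteinbergA_iff_rows_of_det_eq_one {a : Matrix (Fin (N + 1)) (Fin (N + 1)) R}
    (hdet : a.det = 1) :
    IsSteinbergA a ↔ ∀ i : Fin N, a i.succ = Pi.single i.castSucc 1 := by
  rw [isSteinbergA_iff_corner_and_rows, and_iff_right_iff_imp]
  intro h_rows
  rw [det_eq_corner_of_rows h_rows] at hdet
  calc a 0 (Fin.last N) = (-1) ^ N * ((-1) ^ N * a 0 (Fin.last N)) := by
        rw [← mul_assoc, ← mul_pow, neg_one_mul, neg_neg, one_pow, one_mul]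
    _ = (-1) ^ N := by rw [hdet, mul_one]

lemma isSteinbergA_mul_inv_iff {u u' l : Matrix (Fin (N + 1)) (Fin (N + 1)) R}
    (hu : IsUniUpper u) (hu' : IsUniUpper u') (hl : l.det = 1) :
    IsSteinbergA (u * l * u'⁻¹) ↔ ∀ i : Fin N, u' i.castSucc = u i.succ ᵥ* l := by
  have hu'_unit : IsUnit u' := by simp [isUnit_iff_isUnit_det, hu'.det_eq_one]
  have hdet : (u * l * u'⁻¹).det = 1 := by
    simp [det_nonsing_inv, hu.det_eq_one, hu'.det_eq_one, hl]
  rw [isSteinbergA_iff_rows_of_det_eq_one hdet]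
  refine forall_congr' fun i => ?_
  have row_mul : (u * l * u'⁻¹) i.succ ᵥ* u' = u i.succ ᵥ* l := by
    rw [← mul_apply_eq_vecMul, ← mul_apply_eq_vecMul,
      nonsing_inv_mul_cancel_right _ _ ((isUnit_iff_isUnit_det _).1 hu'_unit)]
  rw [← (vecMul_injective_of_isUnit hu'_unit).eq_iff, row_mul, single_one_vecMul, eq_comm]
  rfl

end SteinbergCells

section Recurrence

variable {N : ℕ}

lemma existsUnique_antidiagonal_recurrence {V : Type*} (last : ℤ → V) (f : ℤ → V → V) :
    ∃! u : ℤ → Fin (N + 1) → V,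
      (∀ s, u s (Fin.last N) = last s) ∧
      ∀ s (i : Fin N), u (s + 1) i.castSucc = f s (u s i.succ) := by
  let column : Fin (N + 1) → ℤ → V :=
    Fin.reverseInduction last fun _ next s => f (s - 1) (next (s - 1))
  refine ⟨fun s i => column i s, ⟨fun s => ?_, fun s i => ?_⟩, ?_⟩
  · simp only [column, Fin.reverseInduction_last]
  · simp only [column, Fin.reverseInduction_castSucc, add_sub_cancel_right]
  · rintro u ⟨h_last, h_step⟩
    ext s i
    induction i using Fin.reverseInduction generalizing s with
    | last => simp only [column, Fin.reverseInduction_last, h_last]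
    | cast i ih =>
      obtain ⟨t, rfl⟩ : ∃ t, s = t + 1 := ⟨s - 1, (sub_add_cancel s 1).symm⟩
      simp only [h_step, ih, column, Fin.reverseInduction_castSucc, add_sub_cancel_right]

variable {R : Type*} [CommRing R] {l u : ℤ → Matrix (Fin (N + 1)) (Fin (N + 1)) R}

lemma isUniUpper_of_recurrence (hl : ∀ s, IsUnitHessenberg (l s))
    (h_last : ∀ s, u s (Fin.last N) = Pi.single (Fin.last N) 1)
    (h_step : ∀ s (i : Fin N), u (s + 1) i.castSucc = u s i.succ ᵥ* l s) (s : ℤ) :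
    IsUniUpper (u s) := by
  refine isUniUpper_iff_hasLeadingOne.2 fun i => ?_
  induction i using Fin.reverseInduction generalizing s with
  | last => exact hasLeadingOne_last_iff.2 (h_last s)
  | cast i ih =>
    obtain ⟨t, rfl⟩ : ∃ t, s = t + 1 := ⟨s - 1, (sub_add_cancel s 1).symm⟩
    rw [h_step]
    exact (ih t).vecMul (hl t)

lemma isUniUpper_and_isSteinbergA_iff_recurrence (hl : ∀ s, IsUnitHessenberg (l s))
    (hdet : ∀ s, (l s).det = 1) :
    ((∀ s, IsUniUpper (u s)) ∧ ∀ s, IsSteinbergA (u s * l s * (u (s + 1))⁻¹)) ↔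
      (∀ s, u s (Fin.last N) = Pi.single (Fin.last N) 1) ∧
      ∀ s (i : Fin N), u (s + 1) i.castSucc = u s i.succ ᵥ* l s := by
  constructor
  · rintro ⟨hu, hA⟩
    exact ⟨fun s => hasLeadingOne_last_iff.1 (isUniUpper_iff_hasLeadingOne.1 (hu s) _),
      fun s => (isSteinbergA_mul_inv_iff (hu s) (hu (s + 1)) (hdet s)).1 (hA s)⟩
  · rintro ⟨h_last, h_step⟩
    have hu := isUniUpper_of_recurrence hl h_last h_step
    exact ⟨hu, fun s => (isSteinbergA_mul_inv_iff (hu s) (hu (s + 1)) (hdet s)).2 (h_step s)⟩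

end Recurrence

theorem stmt_18_general {N : ℕ} {R : Type*} [CommRing R]
    {l b : ℤ → Matrix (Fin (N + 1)) (Fin (N + 1)) R} (hl : ∀ s, IsUnitHessenberg (l s))
    (hdet : ∀ s, (l s).det = 1) (hb : ∀ s, b s * (b (s + 1))⁻¹ = l s) :
    ∃! u : ℤ → Matrix (Fin (N + 1)) (Fin (N + 1)) R,
      (∀ s, IsUniUpper (u s)) ∧ ∀ s, IsSteinbergA ((u s * b s) * (u (s + 1) * b (s + 1))⁻¹) := by
  have band_ratio : ∀ (u : ℤ → Matrix (Fin (N + 1)) (Fin (N + 1)) R) (s : ℤ),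
      (u s * b s) * (u (s + 1) * b (s + 1))⁻¹ = u s * l s * (u (s + 1))⁻¹ := fun u s => by
    rw [Matrix.mul_inv_rev, ← hb s]
    simp only [Matrix.mul_assoc]
  simp only [band_ratio, isUniUpper_and_isSteinbergA_iff_recurrence hl hdet]
  exact existsUnique_antidiagonal_recurrence (fun _ => Pi.single (Fin.last N) 1)
    fun s v => v ᵥ* l s

/-- given a sequence `l : ℤ → L(R)` over a commutative `ℂ`-algebra `R` and the
(unique) sequence `b` of lower-triangular matrices with `b 0` having invertible diagonal and
determinant `1` and `b(s)·b(s+1)⁻¹ = l(s)`, there is a unique sequence `u : ℤ → U(R)` such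
that `g(s) := u(s)·b(s)` is an `(SL(n), c)`-band (surjectivity on `R`-points of the morphism
`P`). -/
theorem stmt_18 (n : ℕ) (hn : 2 ≤ n) (R : Type*) [CommRing R] [Algebra ℂ R]
    (l : ℤ → Matrix (Fin n) (Fin n) R) (hl : ∀ s : ℤ, IsSteinbergL (l s))
    (b : ℤ → Matrix (Fin n) (Fin n) R)
    (hblow : ∀ s : ℤ, ∀ i j : Fin n, (i : ℕ) < (j : ℕ) → b s i j = 0)
    (hb0diag : ∀ i : Fin n, IsUnit (b 0 i i))
    (hb0det : (b 0).det = 1)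
    (hbrec : ∀ s : ℤ, b s * (b (s + 1))⁻¹ = l s) :
    ∃! u : ℤ → Matrix (Fin n) (Fin n) R,
      (∀ s : ℤ, IsUniUpper (u s)) ∧
      ∀ s : ℤ, IsSteinbergA ((u s * b s) * (u (s + 1) * b (s + 1))⁻¹) := by
  obtain ⟨N, rfl⟩ : ∃ N, n = N + 1 := ⟨n - 1, by omega⟩
  exact stmt_18_general (fun s => (hl s).isUnitHessenberg) (fun s => (hl s).1) hbrec
end

section
/- Let K be a field and let (b_{s,j})_{s ∈ ℤ, 1 ≤ j ≤ 3} be an array over K such that, for every s ∈ ℤ, the 3×3 matrix g(s) with rows (b_{s,1}, b_{s,2}, b_{s,3}), (b_{s+1,1}, b_{s+1,2}, b_{s+1,3}), (b_{s+2,1}, b_{s+2,2}, b_{s+2,3}) has determinant 1. For s ∈ ℤ set Δ₁^{(s)} := b_{s+2,3} and Δ₂^{(s)} := b_{s+1,2}·b_{s+2,3} − b_{s+2,2}·b_{s+1,3}, and assume Δ₁^{(s)} ≠ 0 and Δ₂^{(s)} ≠ 0 for all s. Then for every s ∈ ℤ, the (1,1) entry of g(s)·g(s+1)⁻¹ equals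 Δ₂^{(s+1)}/Δ₂^{(s)} + (Δ₁^{(s)}·Δ₂^{(s−1)})/(Δ₁^{(s−1)}·Δ₂^{(s)}) + Δ₁^{(s−2)}/Δ₁^{(s−1)}. (This is the SL(3) instance of the identity θ^{(s)}₁ = l₁^{(s)} + l₂^{(s−1)} + l₃^{(s−2)} expressing the q-character of the fundamental module via the discrete Miura transformation.) -/
/-!
The first row of `g(s) g(s+1)⁻¹` gives the recurrence
`b_s = θ₁ b_{s+1} - θ₂ b_{s+2} + (det g(s) / det g(s+1)) b_{s+3}`. Write `[v, w]` for the `2 × 2`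
minor of two rows in their last two columns. Pairing the recurrence with `b_{s+2}` eliminates `θ₂`,
so `θ₁ [b_{s+1}, b_{s+2}]` is a combination of `[b_s, b_{s+2}]` and `[b_{s+2}, b_{s+3}]`. The
minor `[b_s, b_{s+2}]`, whose rows are not consecutive, is then removed by the three-term Plücker
relation for `b_s, b_{s+1}, b_{s+2}`.
-/

open Matrix

section Band

variable {R : Type*} {n : ℕ}

/-- The square matrix `g(s)` formed by the consecutive rows `b_s, b_{s+1}, …` of a band `b`. -/
def bandWindow (b : ℤ → Fin n → R) (s : ℤ) : Matrix (Fin n) (Fin n) R :=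
  of fun i j => b (s + (i : ℕ)) j

theorem bandWindow_succ (b : ℤ → Fin (n + 1) → R) (s : ℤ) (i : Fin n) :
    bandWindow b s i.succ = bandWindow b (s + 1) i.castSucc := by
  ext j
  simp only [bandWindow, of_apply, Fin.val_succ, Fin.val_castSucc, Nat.cast_succ, add_assoc,
    add_comm (1 : ℤ)]

variable [CommRing R]

/-- The matrix `g(s) g(s+1)⁻¹` relating consecutive windows of a band. It is only meaningful
when `g(s+1)` is invertible. -/
noncomputable def bandTransition (b : ℤ → Fin n → R) (s : ℤ) : Matrix (Fin n) (Fin n) R :=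
  bandWindow b s * (bandWindow b (s + 1))⁻¹

theorem bandTransition_mul_bandWindow {b : ℤ → Fin n → R} {s : ℤ}
    (h : IsUnit (bandWindow b (s + 1)).det) :
    bandTransition b s * bandWindow b (s + 1) = bandWindow b s :=
  nonsing_inv_mul_cancel_right _ _ h

theorem bandTransition_succ {b : ℤ → Fin (n + 1) → R} {s : ℤ}
    (h : IsUnit (bandWindow b (s + 1)).det) (i : Fin n) :
    bandTransition b s i.succ = (1 : Matrix (Fin (n + 1)) (Fin (n + 1)) R) i.castSucc := by
  rw [bandTransition, mul_apply_eq_vecMul, bandWindow_succ, ← mul_apply_eq_vecMul,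
    mul_nonsing_inv _ h]

theorem det_bandTransition {b : ℤ → Fin (n + 1) → R} {s : ℤ}
    (h : IsUnit (bandWindow b (s + 1)).det) :
    (bandTransition b s).det = (-1) ^ n * bandTransition b s 0 (Fin.last n) := by
  have minor_eq_one :
      (bandTransition b s).submatrix (Fin.succAbove 0) (Fin.last n).succAbove = 1 := by
    ext i j
    simp [bandTransition_succ h, one_apply]
  rw [det_succ_column _ (Fin.last n), Fin.sum_univ_succ, minor_eq_one]
  simp [bandTransition_succ h, one_apply, Fin.castSucc_ne_last]

theorem bandTransition_zero_last_mul_det {b : ℤ → Fin (n + 1) → R} {s : ℤ}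
    (h : IsUnit (bandWindow b (s + 1)).det) :
    bandTransition b s 0 (Fin.last n) * (bandWindow b (s + 1)).det =
      (-1) ^ n * (bandWindow b s).det := by
  rw [← bandTransition_mul_bandWindow h, det_mul, det_bandTransition h, ← mul_assoc, ← mul_assoc,
    ← mul_pow, neg_one_mul, neg_neg, one_pow, one_mul]

theorem band_apply_eq_sum_bandTransition {b : ℤ → Fin (n + 1) → R} {s : ℤ}
    (h : IsUnit (bandWindow b (s + 1)).det) (j : Fin (n + 1)) :
    b s j = ∑ i : Fin (n + 1), bandTransition b s 0 i * b (s + 1 + (i : ℕ)) j := by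
  simpa [mul_apply, bandWindow] using congrFun₂ (bandTransition_mul_bandWindow h).symm 0 j

end Band

section LastMinor

variable {R : Type*} [CommRing R]

/-- The minor of the rows `v, w` in their last two columns. On consecutive rows of a band it is
the generalized minor `Δ₂`. -/
def lastMinor (v w : Fin 3 → R) : R :=
  v 1 * w 2 - w 1 * v 2

theorem lastMinor_plucker (u v w : Fin 3 → R) :
    v 2 * lastMinor u w = u 2 * lastMinor v w + w 2 * lastMinor u v := by
  simp only [lastMinor]
  ring

theorem bandTransition_zero_zero_mul_lastMinor {b : ℤ → Fin 3 → R} {s : ℤ}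
    (h : IsUnit (bandWindow b (s + 1)).det) :
    bandTransition b s 0 0 * lastMinor (b (s + 1)) (b (s + 2)) =
      lastMinor (b s) (b (s + 2)) +
        bandTransition b s 0 2 * lastMinor (b (s + 2)) (b (s + 3)) := by
  have recurrence (j : Fin 3) : b s j = bandTransition b s 0 0 * b (s + 1) j +
      bandTransition b s 0 1 * b (s + 2) j + bandTransition b s 0 2 * b (s + 3) j := by
    simpa [Fin.sum_univ_three, add_assoc] using band_apply_eq_sum_bandTransition h j
  simp only [lastMinor]
  linear_combination b (s + 2) 1 * recurrence 2 - b (s + 2) 2 * recurrence 1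

end LastMinor

theorem stmt_19_general {K : Type*} [Field K] {b : ℤ → Fin 3 → K} {Δ₁ Δ₂ : ℤ → K}
    (hΔ₁ : ∀ s : ℤ, Δ₁ s = b (s + 2) 2)
    (hΔ₂ : ∀ s : ℤ, Δ₂ s = lastMinor (b (s + 1)) (b (s + 2)))
    {s : ℤ} (hdet : (bandWindow b (s + 1)).det ≠ 0) (h1 : Δ₁ (s - 1) ≠ 0) (h2 : Δ₂ s ≠ 0) :
    bandTransition b s 0 0 =
      (bandWindow b s).det / (bandWindow b (s + 1)).det * (Δ₂ (s + 1) / Δ₂ s) +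
        Δ₁ s * Δ₂ (s - 1) / (Δ₁ (s - 1) * Δ₂ s) + Δ₁ (s - 2) / Δ₁ (s - 1) := by
  have last_coeff : bandTransition b s 0 2 =
      (bandWindow b s).det / (bandWindow b (s + 1)).det := by
    rw [eq_div_iff hdet]
    simpa using bandTransition_zero_last_mul_det hdet.isUnit
  have pairing : bandTransition b s 0 0 * Δ₂ s =
      lastMinor (b s) (b (s + 2)) + bandTransition b s 0 2 * Δ₂ (s + 1) := by
    simpa [hΔ₂, add_assoc] using bandTransition_zero_zero_mul_lastMinor hdet.isUnit
  have plucker : Δ₁ (s - 1) * lastMinor (b s) (b (s + 2)) =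
      Δ₁ (s - 2) * Δ₂ s + Δ₁ s * Δ₂ (s - 1) := by
    have index_eq : s - 1 + 2 = s + 1 := by ring
    simpa [hΔ₁, hΔ₂, index_eq] using lastMinor_plucker (b s) (b (s + 1)) (b (s + 2))
  rw [← last_coeff]
  field_simp
  linear_combination Δ₁ (s - 1) * pairing + plucker

/-- for an `(SL(3), c)`-band given by an array `(b_{s,j})` over a field `K`, with
`Δ₁^{(s)} = b_{s+2,3}` and `Δ₂^{(s)} = b_{s+1,2}·b_{s+2,3} − b_{s+2,2}·b_{s+1,3}` all nonzero,
the `(1,1)` entry of `g(s)·g(s+1)⁻¹` equals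
`Δ₂^{(s+1)}/Δ₂^{(s)} + Δ₁^{(s)}Δ₂^{(s−1)}/(Δ₁^{(s−1)}Δ₂^{(s)}) + Δ₁^{(s−2)}/Δ₁^{(s−1)}`. -/
theorem stmt_19 (K : Type*) [Field K] (b : ℤ → Fin 3 → K)
    (hdet : ∀ s : ℤ, (Matrix.of fun i j : Fin 3 => b (s + (i : ℕ)) j).det = 1)
    (Δ₁ Δ₂ : ℤ → K)
    (hΔ₁ : ∀ s : ℤ, Δ₁ s = b (s + 2) 2)
    (hΔ₂ : ∀ s : ℤ, Δ₂ s = b (s + 1) 1 * b (s + 2) 2 - b (s + 2) 1 * b (s + 1) 2)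
    (h1 : ∀ s : ℤ, Δ₁ s ≠ 0) (h2 : ∀ s : ℤ, Δ₂ s ≠ 0) (s : ℤ) :
    ((Matrix.of fun i j : Fin 3 => b (s + (i : ℕ)) j) *
        (Matrix.of fun i j : Fin 3 => b (s + 1 + (i : ℕ)) j)⁻¹) 0 0 =
      Δ₂ (s + 1) / Δ₂ s + Δ₁ s * Δ₂ (s - 1) / (Δ₁ (s - 1) * Δ₂ s) +
        Δ₁ (s - 2) / Δ₁ (s - 1) := by
  have det_eq_one (t : ℤ) : (bandWindow b t).det = 1 := hdet t
  change bandTransition b s 0 0 = _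
  simpa only [det_eq_one, div_one, one_mul] using
    stmt_19_general hΔ₁ hΔ₂ (det_eq_one (s + 1) ▸ one_ne_zero) (h1 (s - 1)) (h2 s)
end
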